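/- arXiv:2011.05584 — 2 statements merged into one kernel-verified Lean document; each statement's English description precedes it below -/
import Mathlib

section
/- Let (A_m)_{m≥1} be a nondecreasing sequence of Borel subsets of C and let A = ⋃_{m=1}^∞ A_m. Then μ(A_m) converges to μ(A) as m → ∞ (equivalently, sup_{m≥1} μ(A_m) = μ(A)). -/
open MeasureTheory Matrix Set Filter Topology
open scoped ENNReal

noncomputable section

/-- The space `C` of continuous functions on `[0,1]` vanishing at `0`,
with the supremum metric (inherited from `C([0,1], ℝ)`). -/
abbrev Cz : Type := {f : C(Set.Icc (0:ℝ) 1, ℝ) // f ⟨0, ⟨le_refl 0, zero_le_one⟩⟩ = 0}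

/-- The projection `π_n : C → ℝ^n`, `x ↦ (x(t_1), …, x(t_n))`. -/
def proj (t : ℕ → ℝ) (ht : ∀ k, t k ∈ Set.Ioc (0:ℝ) 1) (n : ℕ) (x : Cz) : Fin n → ℝ :=
  fun i => (x : C(Set.Icc (0:ℝ) 1, ℝ)) ⟨t i, Set.Ioc_subset_Icc_self (ht i)⟩

/-- The covariance matrix `M_n` with entries `min (t j) (t r)`. -/
def covM (t : ℕ → ℝ) (n : ℕ) : Matrix (Fin n) (Fin n) ℝ :=
  Matrix.of fun j r => min (t (j : ℕ)) (t (r : ℕ))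

/-- The centered Gaussian measure on `ℝ^n` with (positive definite) covariance matrix `M`:
the measure with density `u ↦ ((2π)^n det M)^{-1/2} exp (-⟨u, M⁻¹ u⟩ / 2)` w.r.t. Lebesgue
measure. -/
def gauss (n : ℕ) (M : Matrix (Fin n) (Fin n) ℝ) : Measure (Fin n → ℝ) :=
  volume.withDensity fun u =>
    ENNReal.ofReal ((((2 * Real.pi) ^ n * M.det) ^ (-(1:ℝ)/2 : ℝ)) *
      Real.exp (-(u ⬝ᵥ M⁻¹.mulVec u) / 2))

/-- `φ(K) = inf_{n ≥ 1} ν_n (π_n(K))`. -/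
def phi (t : ℕ → ℝ) (ht : ∀ k, t k ∈ Set.Ioc (0:ℝ) 1) (K : Set Cz) : ℝ≥0∞ :=
  ⨅ n : ℕ, gauss (n+1) (covM t (n+1)) (proj t ht (n+1) '' K)

/-- `μ(A) = sup {φ(K) : K ⊆ A, K compact}`. -/
def mu (t : ℕ → ℝ) (ht : ∀ k, t k ∈ Set.Ioc (0:ℝ) 1) (A : Set Cz) : ℝ≥0∞ :=
  ⨆ (K : Set Cz) (_ : K ⊆ A) (_ : IsCompact K), phi t ht K

instance : MeasurableSpace Cz := borel Cz
instance : BorelSpace Cz := ⟨rfl⟩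

/-!
Let `P` be the law on `ℝ^ℕ` of the centered Gaussian sequence with covariance `min (t j) (t r)`;
its first `n` coordinates have law `ν_n`. Sampling a path at the times `t k` is a continuous
injection `J : C → ℝ^ℕ`, and `J '' K` is compact for compact `K`, hence is the decreasing
intersection of the cylinders over its finite-dimensional projections `π_n '' K`. Therefore
`φ K = P (J '' K)`: on compact sets `φ` is the pullback `Q` of `P` along `J`. As `C` is Polish, the
finite Borel measure `Q` is inner regular, so `μ = Q` on Borel sets, and `μ` inherits continuity
from below.

The law `P` is obtained without an extension theorem: `min s u` is the inner product of the
indicators of `(0, s]` and `(0, u]` in `L²(ℝ)`, and the coefficients of these indicators in their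
Gram–Schmidt basis form a triangular array that turns i.i.d. standard Gaussians into the required
sequence.
-/

open ProbabilityTheory InnerProductSpace

section Density

variable {α β : Type*} [MeasurableSpace α] [MeasurableSpace β]

lemma map_withDensity_comp {μ : Measure α} {f : α → β} {p : β → ℝ≥0∞} (hf : Measurable f)
    (hp : Measurable p) : (μ.withDensity fun x => p (f x)).map f = (μ.map f).withDensity p := by
  ext s hs
  rw [Measure.map_apply hf hs, withDensity_apply _ (hf hs), withDensity_apply _ hs,
    setLIntegral_map hs hp hf]

lemma pi_withDensity_ofReal {ι : Type*} [Fintype ι] {X : ι → Type*} [∀ i, MeasurableSpace (X i)]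
    {μ : ∀ i, Measure (X i)} [∀ i, SigmaFinite (μ i)] {p : ∀ i, X i → ℝ}
    (hp : ∀ i, Integrable (p i) (μ i)) (hp_nonneg : ∀ i x, 0 ≤ p i x) :
    Measure.pi (fun i => (μ i).withDensity fun x => ENNReal.ofReal (p i x)) =
      (Measure.pi μ).withDensity fun u => ENNReal.ofReal (∏ i, p i (u i)) := by
  have (i : ι) : IsFiniteMeasure ((μ i).withDensity fun x => ENNReal.ofReal (p i x)) :=
    isFiniteMeasure_withDensity_ofReal (hp i).2
  refine Measure.pi_eq fun s hs => ?_
  rw [withDensity_apply _ (.univ_pi hs), Measure.restrict_pi_pi,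
    ← ofReal_integral_eq_lintegral_ofReal (.fintype_prod_dep fun i => (hp i).restrict)
      (ae_of_all _ fun u => Finset.prod_nonneg fun i _ => hp_nonneg i (u i)),
    integral_fintype_prod_eq_prod,
    ENNReal.ofReal_prod_of_nonneg fun i _ => integral_nonneg (hp_nonneg i)]
  refine Finset.prod_congr rfl fun i _ => ?_
  rw [withDensity_apply _ (hs i),
    ofReal_integral_eq_lintegral_ofReal (hp i).restrict (ae_of_all _ (hp_nonneg i))]

end Density

section Gaussian

variable {n : ℕ}

/-- The real-valued density of `gauss n M` with respect to Lebesgue measure. -/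
def gaussPDFReal (M : Matrix (Fin n) (Fin n) ℝ) (u : Fin n → ℝ) : ℝ :=
  ((2 * Real.pi) ^ n * M.det) ^ (-(1 : ℝ) / 2) * Real.exp (-(u ⬝ᵥ M⁻¹ *ᵥ u) / 2)

lemma measurable_gaussPDFReal (M : Matrix (Fin n) (Fin n) ℝ) : Measurable (gaussPDFReal M) := by
  unfold gaussPDFReal
  fun_prop

lemma gaussPDFReal_one (u : Fin n → ℝ) : gaussPDFReal 1 u = ∏ i, gaussianPDFReal 0 1 (u i) := by
  have normalization : ((2 * Real.pi) ^ n) ^ (-(1 : ℝ) / 2) = (√(2 * Real.pi))⁻¹ ^ n := by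
    have pow_eq_sq : (2 * Real.pi) ^ n = (√(2 * Real.pi) ^ n) ^ 2 := by
      rw [← pow_mul, mul_comm n 2, pow_mul, Real.sq_sqrt (by positivity)]
    rw [neg_div, Real.rpow_neg (by positivity), ← Real.sqrt_eq_rpow, pow_eq_sq,
      Real.sqrt_sq (by positivity), inv_pow]
  have exponent : -(u ⬝ᵥ u) / 2 = ∑ i, -(u i) ^ 2 / 2 := by
    simp only [dotProduct, ← Finset.sum_div, Finset.sum_neg_distrib, sq]
  simp only [gaussPDFReal, gaussianPDFReal, Matrix.det_one, mul_one, inv_one, Matrix.one_mulVec,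
    normalization, exponent, Real.exp_sum, Finset.prod_mul_distrib, Finset.prod_const,
    Finset.card_univ, Fintype.card_fin, NNReal.coe_one, sub_zero]

lemma pi_gaussianReal_eq_gauss_one :
    Measure.pi (fun _ : Fin n => gaussianReal 0 1) = gauss n 1 := by
  calc Measure.pi (fun _ : Fin n => gaussianReal 0 1)
    _ = Measure.pi fun _ : Fin n =>
          volume.withDensity fun x => ENNReal.ofReal (gaussianPDFReal 0 1 x) := by
      rw [gaussianReal_of_var_ne_zero 0 one_ne_zero]
      rfl
    _ = volume.withDensity fun u => ENNReal.ofReal (∏ i, gaussianPDFReal 0 1 (u i)) :=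
      pi_withDensity_ofReal (fun _ => integrable_gaussianPDFReal 0 1)
        fun _ => gaussianPDFReal_nonneg 0 1
    _ = gauss n 1 := by
      simp only [← gaussPDFReal_one]
      rfl

variable {L M : Matrix (Fin n) (Fin n) ℝ}

lemma dotProduct_inv_conj_mulVec (hL : L.det ≠ 0) (u : Fin n → ℝ) :
    (L *ᵥ u) ⬝ᵥ (L * M * Lᵀ)⁻¹ *ᵥ (L *ᵥ u) = u ⬝ᵥ M⁻¹ *ᵥ u := by
  have cancel : Lᵀ * (L * M * Lᵀ)⁻¹ * L = M⁻¹ := by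
    rw [Matrix.mul_inv_rev, Matrix.mul_inv_rev,
      Matrix.mul_nonsing_inv_cancel_left _ _ (by simpa using hL),
      Matrix.nonsing_inv_mul_cancel_right _ _ hL.isUnit]
  rw [← cancel, ← Matrix.mulVec_mulVec, ← Matrix.mulVec_mulVec, Matrix.dotProduct_mulVec u,
    Matrix.vecMul_transpose]

lemma gaussPDFReal_eq_abs_det_mul_gaussPDFReal_conj (hL : L.det ≠ 0) (hM : 0 ≤ M.det)
    (u : Fin n → ℝ) :
    gaussPDFReal M u = |L.det| * gaussPDFReal (L * M * Lᵀ) (L *ᵥ u) := by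
  have det_conj : (2 * Real.pi) ^ n * (L * M * Lᵀ).det
      = |L.det| ^ 2 * ((2 * Real.pi) ^ n * M.det) := by
    rw [Matrix.det_mul, Matrix.det_mul, Matrix.det_transpose, sq_abs]
    ring
  have rpow_det : (|L.det| ^ 2) ^ (-(1 : ℝ) / 2) = |L.det|⁻¹ := by
    rw [neg_div, Real.rpow_neg (sq_nonneg _), ← Real.sqrt_eq_rpow, Real.sqrt_sq (abs_nonneg _)]
  rw [gaussPDFReal, gaussPDFReal, dotProduct_inv_conj_mulVec hL, det_conj,
    Real.mul_rpow (sq_nonneg _) (by positivity), rpow_det, mul_assoc,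
    mul_inv_cancel_left₀ (abs_ne_zero.2 hL)]

lemma map_mulVec_gauss (hL : L.det ≠ 0) (hM : 0 ≤ M.det) :
    (gauss n M).map (L *ᵥ ·) = gauss n (L * M * Lᵀ) := by
  have measurable_L : Measurable fun u : Fin n → ℝ => L *ᵥ u := by fun_prop
  let p (u : Fin n → ℝ) : ℝ≥0∞ :=
    ENNReal.ofReal |L.det| * ENNReal.ofReal (gaussPDFReal (L * M * Lᵀ) u)
  have measurable_p : Measurable p := (measurable_gaussPDFReal _).ennreal_ofReal.const_mul _
  calc (gauss n M).map (L *ᵥ ·)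
    _ = (volume.withDensity fun u => p (L *ᵥ u)).map (L *ᵥ ·) := by
      simp only [p, ← ENNReal.ofReal_mul (abs_nonneg _),
        ← gaussPDFReal_eq_abs_det_mul_gaussPDFReal_conj hL hM]
      rfl
    _ = (volume.map (L *ᵥ ·)).withDensity p := map_withDensity_comp measurable_L measurable_p
    _ = (ENNReal.ofReal |L.det⁻¹| • volume).withDensity p := by
      rw [← Real.map_matrix_volume_pi_eq_smul_volume_pi hL]
      rfl
    _ = gauss n (L * M * Lᵀ) := by
      rw [withDensity_smul_measure, ← withDensity_smul _ measurable_p]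
      congr 1 with u
      simp only [Pi.smul_apply, smul_eq_mul, p, ← mul_assoc, ← ENNReal.ofReal_mul (abs_nonneg _),
        ← abs_mul, inv_mul_cancel₀ hL, abs_one, one_mul]
      rfl

end Gaussian

section Truncation

variable {X : Type*}

/-- The first `n` coordinates of a sequence, indexed by `Fin n` to match `proj`. -/
def truncate (n : ℕ) (y : ℕ → X) : Fin n → X := fun i => y i

lemma antitone_preimage_truncate_image (S : Set (ℕ → X)) :
    Antitone fun n => truncate n ⁻¹' (truncate n '' S) := by
  rintro m n hmn y ⟨x, hx, hxy⟩
  exact ⟨x, hx, funext fun i => congrFun hxy (Fin.castLE hmn i)⟩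

variable [TopologicalSpace X]

lemma continuous_truncate (n : ℕ) : Continuous (truncate n : (ℕ → X) → Fin n → X) := by
  unfold truncate
  fun_prop

lemma iInter_preimage_truncate_image_of_isClosed {S : Set (ℕ → X)} (hS : IsClosed S) :
    ⋂ n, truncate n ⁻¹' (truncate n '' S) = S := by
  refine Subset.antisymm (fun y hy => ?_) (subset_iInter fun n => subset_preimage_image _ _)
  choose x hxS hxy using mem_iInter.1 hy
  refine hS.mem_of_tendsto (b := atTop) (f := x) (tendsto_pi_nhds.2 fun k => ?_)
    (Eventually.of_forall hxS)
  refine tendsto_const_nhds.congr' ?_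
  filter_upwards [eventually_gt_atTop k] with n hn
  exact (congrFun (hxy n) ⟨k, hn⟩).symm

variable [T2Space X] [SecondCountableTopology X] [MeasurableSpace X] [BorelSpace X]

lemma measure_eq_iInf_map_truncate_image (P : Measure (ℕ → X)) [IsFiniteMeasure P]
    {S : Set (ℕ → X)} (hS : IsCompact S) :
    P S = ⨅ n, P.map (truncate (n + 1)) (truncate (n + 1) '' S) := by
  have measurableSet_image (n : ℕ) : MeasurableSet (truncate n '' S) :=
    (hS.image (continuous_truncate n)).measurableSet
  have measurable_truncate (n : ℕ) : Measurable (truncate n : (ℕ → X) → Fin n → X) :=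
    (continuous_truncate n).measurable
  have antitone_cylinder := antitone_preimage_truncate_image S
  calc P S
    _ = P (⋂ n, truncate n ⁻¹' (truncate n '' S)) := by
      rw [iInter_preimage_truncate_image_of_isClosed hS.isClosed]
    _ = ⨅ n, P (truncate n ⁻¹' (truncate n '' S)) :=
      antitone_cylinder.measure_iInter
        (fun n => (measurable_truncate n (measurableSet_image n)).nullMeasurableSet)
        ⟨0, measure_ne_top P _⟩
    _ = ⨅ n, P (truncate (n + 1) ⁻¹' (truncate (n + 1) '' S)) :=
      (Antitone.iInf_nat_add (fun _ _ h => measure_mono (antitone_cylinder h)) 1).symm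
    _ = ⨅ n, P.map (truncate (n + 1)) (truncate (n + 1) '' S) := by
      simp only [Measure.map_apply (measurable_truncate _) (measurableSet_image _)]

end Truncation

lemma map_truncate_infinitePi {X : Type*} [MeasurableSpace X] (P : ℕ → Measure X)
    [∀ k, IsProbabilityMeasure (P k)] (n : ℕ) :
    (Measure.infinitePi P).map (truncate n) = Measure.pi fun i : Fin n => P i := by
  rw [← Measure.infinitePi_eq_pi]
  exact Measure.map_infinitePi_infinitePi_of_inj Fin.val_injective

section GaussianSequence

variable {E : Type*} [NormedAddCommGroup E] [InnerProductSpace ℝ E]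

/-- The array of coefficients of `f` in its Gram–Schmidt orthonormalization: the Cholesky factor of
the (possibly infinite) Gram matrix of `f`, see `sum_choleskyFactor_mul_choleskyFactor`. -/
def choleskyFactor {ι : Type*} [LinearOrder ι] [LocallyFiniteOrderBot ι] [WellFoundedLT ι]
    (f : ι → E) (i j : ι) : ℝ :=
  inner ℝ (gramSchmidtNormed ℝ f j) (f i)

section Cholesky

variable {ι : Type*} [LinearOrder ι] [LocallyFiniteOrderBot ι] [WellFoundedLT ι] {f : ι → E}
  {i : ι} {s : Finset ι}

lemma choleskyFactor_eq_zero_of_lt (f : ι → E) {j : ι} (hij : i < j) :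
    choleskyFactor f i j = 0 := by
  rw [choleskyFactor, gramSchmidtNormed, inner_smul_left, gramSchmidt_inv_triangular ℝ f hij,
    mul_zero]

lemma sum_choleskyFactor_smul_gramSchmidtNormed (hf : LinearIndependent ℝ f)
    (hs : Finset.Iic i ⊆ s) : ∑ k ∈ s, choleskyFactor f i k • gramSchmidtNormed ℝ f k = f i := by
  have mem_span : f i ∈ Submodule.span ℝ (gramSchmidtNormed ℝ f '' s) := by
    rw [span_gramSchmidtNormed]
    refine Submodule.span_mono (image_mono ?_) (mem_span_gramSchmidt ℝ f le_rfl)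
    rwa [← Finset.coe_Iic, Finset.coe_subset]
  obtain ⟨c, hc⟩ := (Submodule.mem_span_image_finset_iff_exists_fun' ℝ).1 mem_span
  conv_rhs => rw [← hc]
  refine Finset.sum_congr rfl fun k hk => ?_
  rw [choleskyFactor, ← hc, (gramSchmidtNormed_orthonormal hf).inner_right_sum c hk]

lemma sum_choleskyFactor_mul_choleskyFactor (hf : LinearIndependent ℝ f) (hs : Finset.Iic i ⊆ s)
    (j : ι) : ∑ k ∈ s, choleskyFactor f i k * choleskyFactor f j k = inner ℝ (f i) (f j) := by
  conv_rhs => rw [← sum_choleskyFactor_smul_gramSchmidtNormed hf hs]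
  simp only [sum_inner, real_inner_smul_left, choleskyFactor]

end Cholesky

variable {f : ℕ → E}

/-- The leading `n × n` block of `choleskyFactor f`. -/
def choleskyBlock (f : ℕ → E) (n : ℕ) : Matrix (Fin n) (Fin n) ℝ :=
  Matrix.of fun i j => choleskyFactor f i j

lemma choleskyBlock_mul_transpose (hf : LinearIndependent ℝ f) (n : ℕ) :
    choleskyBlock f n * (choleskyBlock f n)ᵀ = Matrix.gram ℝ fun i : Fin n => f i := by
  ext i j
  have Iic_subset : Finset.Iic (i : ℕ) ⊆ Finset.range n := fun k hk =>
    Finset.mem_range.2 ((Finset.mem_Iic.1 hk).trans_lt i.2)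
  rw [Matrix.gram_apply, ← sum_choleskyFactor_mul_choleskyFactor hf Iic_subset, Finset.sum_range]
  rfl

lemma det_choleskyBlock_ne_zero (hf : LinearIndependent ℝ f) (n : ℕ) :
    (choleskyBlock f n).det ≠ 0 := by
  have det_gram_ne_zero : (Matrix.gram ℝ fun i : Fin n => f i).det ≠ 0 :=
    Matrix.det_gram_ne_zero_iff_linearIndependent.2 (hf.comp _ Fin.val_injective)
  rw [← choleskyBlock_mul_transpose hf, Matrix.det_mul] at det_gram_ne_zero
  exact left_ne_zero_of_mul det_gram_ne_zero

/-- The triangular linear map on sequences with matrix `choleskyFactor f`. -/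
def choleskyMap (f : ℕ → E) (x : ℕ → ℝ) : ℕ → ℝ :=
  fun i => ∑ j ∈ Finset.range (i + 1), choleskyFactor f i j * x j

lemma measurable_choleskyMap (f : ℕ → E) : Measurable (choleskyMap f) := by
  unfold choleskyMap
  fun_prop

lemma truncate_choleskyMap (f : ℕ → E) (n : ℕ) (x : ℕ → ℝ) :
    truncate n (choleskyMap f x) = choleskyBlock f n *ᵥ truncate n x := by
  ext i
  calc ∑ j ∈ Finset.range (i + 1), choleskyFactor f i j * x j
    _ = ∑ j ∈ Finset.range n, choleskyFactor f i j * x j := by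
      refine Finset.sum_subset (Finset.range_subset_range.2 i.2) fun j _ hj => ?_
      rw [choleskyFactor_eq_zero_of_lt f (by simpa using hj), zero_mul]
    _ = (choleskyBlock f n *ᵥ truncate n x) i := Finset.sum_range _

/-- The law of the centered Gaussian sequence with covariance `⟪f i, f j⟫`, realized as the image of
i.i.d. standard Gaussians. -/
def gaussianSequenceLaw (f : ℕ → E) : Measure (ℕ → ℝ) :=
  (Measure.infinitePi fun _ => gaussianReal 0 1).map (choleskyMap f)

instance (f : ℕ → E) : IsProbabilityMeasure (gaussianSequenceLaw f) :=
  Measure.isProbabilityMeasure_map (measurable_choleskyMap f).aemeasurable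

theorem map_truncate_gaussianSequenceLaw (hf : LinearIndependent ℝ f) (n : ℕ) :
    (gaussianSequenceLaw f).map (truncate n) = gauss n (Matrix.gram ℝ fun i : Fin n => f i) := by
  have measurable_truncate : Measurable (truncate n : (ℕ → ℝ) → Fin n → ℝ) :=
    (continuous_truncate n).measurable
  have measurable_mulVec : Measurable fun u : Fin n → ℝ => choleskyBlock f n *ᵥ u := by fun_prop
  calc (gaussianSequenceLaw f).map (truncate n)
    _ = ((Measure.infinitePi fun _ => gaussianReal 0 1).map (truncate n)).map
          (choleskyBlock f n *ᵥ ·) := by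
      rw [gaussianSequenceLaw, Measure.map_map measurable_truncate (measurable_choleskyMap f),
        Measure.map_map measurable_mulVec measurable_truncate]
      exact congrArg (Measure.map · _) (funext (truncate_choleskyMap f n))
    _ = (gauss n 1).map (choleskyBlock f n *ᵥ ·) := by
      rw [map_truncate_infinitePi, pi_gaussianReal_eq_gauss_one]
    _ = gauss n (Matrix.gram ℝ fun i : Fin n => f i) := by
      rw [map_mulVec_gauss (det_choleskyBlock_ne_zero hf n) (by simp), mul_one,
        choleskyBlock_mul_transpose hf]

end GaussianSequence

section IntervalIndicator

/-- The indicator function of `(0, s]` as an element of `L²(ℝ)`. -/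
def intervalIndicator (s : ℝ) : Lp ℝ 2 (volume : Measure ℝ) :=
  indicatorConstLp 2 (measurableSet_Ioc (a := (0 : ℝ)) (b := s)) measure_Ioc_lt_top.ne 1

lemma inner_intervalIndicator {s u : ℝ} (hs : 0 ≤ s) (hu : 0 ≤ u) :
    inner ℝ (intervalIndicator s) (intervalIndicator u) = min s u := by
  rw [intervalIndicator, intervalIndicator,
    L2.real_inner_indicatorConstLp_one_indicatorConstLp_one measurableSet_Ioc measurableSet_Ioc
      measure_Ioc_lt_top.ne measure_Ioc_lt_top.ne, Ioc_inter_Ioc, max_self,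
    Real.volume_real_Ioc_of_le (le_min hs hu), sub_zero]

lemma second_difference_min (s u h : ℝ) (hh : 0 ≤ h) :
    2 * min s u - min s (u - h) - min s (u + h) = max 0 (h - |s - u|) := by
  grind

lemma inner_intervalIndicator_second_difference {s u h : ℝ} (hs : 0 ≤ s) (hh : 0 ≤ h)
    (hu : h ≤ u) :
    inner ℝ (2 • intervalIndicator u - intervalIndicator (u - h) - intervalIndicator (u + h))
      (intervalIndicator s) = max 0 (h - |s - u|) := by
  rw [inner_sub_left, inner_sub_left, ← Nat.cast_smul_eq_nsmul ℝ, real_inner_smul_left,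
    inner_intervalIndicator (by linarith) hs, inner_intervalIndicator (by linarith) hs,
    inner_intervalIndicator (by linarith) hs, ← second_difference_min s u h hh]
  simp only [min_comm s, Nat.cast_ofNat]

lemma linearIndependent_intervalIndicator {ι : Type*} {t : ι → ℝ} (ht_pos : ∀ k, 0 < t k)
    (ht_inj : Function.Injective t) : LinearIndependent ℝ fun k => intervalIndicator (t k) := by
  rw [linearIndependent_iff']
  intro S c hc k hk
  obtain ⟨h, hh_pos, hh_le, hh_sep⟩ :
      ∃ h : ℝ, 0 < h ∧ h ≤ t k ∧ ∀ j ∈ S, j ≠ k → h ≤ |t j - t k| := by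
    have separated : ∀ᶠ h in 𝓝[>] (0 : ℝ), ∀ j ∈ S, j ≠ k → h ≤ |t j - t k| := by
      rw [Filter.eventually_all_finset]
      intro j _
      by_cases hjk : j = k
      · exact Eventually.of_forall fun _ hne => absurd hjk hne
      · have dist_pos : 0 < |t j - t k| := abs_pos.2 (sub_ne_zero.2 (ht_inj.ne hjk))
        exact nhdsWithin_le_nhds ((eventually_le_nhds dist_pos).mono fun _ hle _ => hle)
    have small : ∀ᶠ h in 𝓝[>] (0 : ℝ), h ≤ t k :=
      nhdsWithin_le_nhds (eventually_le_nhds (ht_pos k))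
    exact (eventually_mem_nhdsWithin.and (small.and separated)).exists
  -- Testing against the second difference at `t k` with step `h` isolates the coefficient `c k`.
  have tested := congrArg (inner ℝ (2 • intervalIndicator (t k) - intervalIndicator (t k - h) -
    intervalIndicator (t k + h))) hc
  simp only [inner_sum, real_inner_smul_right, inner_zero_right,
    inner_intervalIndicator_second_difference (ht_pos _).le hh_pos.le hh_le] at tested
  rw [Finset.sum_eq_single_of_mem k hk fun j hj hjk => by
    rw [max_eq_left (sub_nonpos.2 (hh_sep j hj hjk)), mul_zero]] at tested
  simpa [hh_pos.le, hh_pos.ne'] using tested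

end IntervalIndicator

lemma covM_eq_gram_intervalIndicator {t : ℕ → ℝ} (ht_nonneg : ∀ k, 0 ≤ t k) (n : ℕ) :
    covM t n = Matrix.gram ℝ fun i : Fin n => intervalIndicator (t i) := by
  ext i j
  exact (inner_intervalIndicator (ht_nonneg i) (ht_nonneg j)).symm

/-- The law on `ℝ^ℕ` of Brownian motion sampled at the times `t k`. -/
def sampledBrownianLaw (t : ℕ → ℝ) : Measure (ℕ → ℝ) :=
  gaussianSequenceLaw fun k => intervalIndicator (t k)

instance (t : ℕ → ℝ) : IsProbabilityMeasure (sampledBrownianLaw t) :=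
  inferInstanceAs (IsProbabilityMeasure (gaussianSequenceLaw _))

lemma map_truncate_sampledBrownianLaw {t : ℕ → ℝ} (ht_pos : ∀ k, 0 < t k)
    (ht_inj : Function.Injective t) (n : ℕ) :
    (sampledBrownianLaw t).map (truncate n) = gauss n (covM t n) := by
  rw [covM_eq_gram_intervalIndicator fun k => (ht_pos k).le]
  exact map_truncate_gaussianSequenceLaw (linearIndependent_intervalIndicator ht_pos ht_inj) n

section PathSpace

instance : PolishSpace Cz :=
  (isClosed_eq (continuous_eval_const _) continuous_const).polishSpace

variable {t : ℕ → ℝ} (ht : ∀ k, t k ∈ Ioc (0 : ℝ) 1)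

/-- The values of a path at all the times `t k`; its first `n` entries are `proj t ht n x`. -/
def sample (x : Cz) : ℕ → ℝ := fun k => x.1 ⟨t k, Ioc_subset_Icc_self (ht k)⟩

lemma continuous_sample : Continuous (sample ht) :=
  continuous_pi fun _ => (continuous_eval_const _).comp continuous_subtype_val

lemma injective_sample (ht_dense : Icc (0 : ℝ) 1 ⊆ closure (range t)) :
    Function.Injective (sample ht) := by
  have dense_times : DenseRange fun k => (⟨t k, Ioc_subset_Icc_self (ht k)⟩ : Icc (0 : ℝ) 1) := by
    rw [DenseRange, Subtype.dense_iff]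
    intro u hu
    rw [← range_comp]
    exact ht_dense hu
  intro x y hxy
  exact Subtype.ext <| DFunLike.coe_injective <|
    dense_times.equalizer (map_continuous x.1) (map_continuous y.1) hxy

lemma measurableEmbedding_sample (ht_dense : Icc (0 : ℝ) 1 ⊆ closure (range t)) :
    MeasurableEmbedding (sample ht) :=
  (continuous_sample ht).measurableEmbedding (injective_sample ht ht_dense)

lemma phi_eq_sampledBrownianLaw_image (ht_inj : Function.Injective t) {K : Set Cz}
    (hK : IsCompact K) : phi t ht K = sampledBrownianLaw t (sample ht '' K) := by
  rw [measure_eq_iInf_map_truncate_image _ (hK.image (continuous_sample ht)), phi]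
  refine iInf_congr fun n => ?_
  rw [map_truncate_sampledBrownianLaw (fun k => (ht k).1) ht_inj, ← image_comp]
  rfl

/-- The pullback of `sampledBrownianLaw t` to path space, which turns out to be `mu t ht`. -/
def pathMeasure : Measure Cz := (sampledBrownianLaw t).comap (sample ht)

instance : IsFiniteMeasure (pathMeasure ht) :=
  inferInstanceAs (IsFiniteMeasure (Measure.comap _ _))

theorem mu_eq_pathMeasure (ht_inj : Function.Injective t)
    (ht_dense : Icc (0 : ℝ) 1 ⊆ closure (range t)) {B : Set Cz} (hB : MeasurableSet B) :
    mu t ht B = pathMeasure ht B := by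
  rw [hB.measure_eq_iSup_isCompact, mu]
  refine iSup_congr fun K => iSup_congr fun _ => iSup_congr fun hK => ?_
  rw [phi_eq_sampledBrownianLaw_image ht ht_inj hK, pathMeasure,
    (measurableEmbedding_sample ht ht_dense).comap_apply]

end PathSpace

/-- if Borel sets `A_m` increase to `A = ⋃_m A_m`, then
`μ(A_m) → μ(A)`. -/
theorem stmt13 (t : ℕ → ℝ) (ht : ∀ k, t k ∈ Set.Ioc (0:ℝ) 1)
    (htinj : Function.Injective t)
    (htdense : Set.Icc (0:ℝ) 1 ⊆ closure (Set.range t))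
    (A : ℕ → Set Cz) (hA : ∀ m, MeasurableSet (A m)) (hmono : Monotone A) :
    Tendsto (fun m => mu t ht (A m)) atTop (𝓝 (mu t ht (⋃ m, A m))) := by
  simp_rw [mu_eq_pathMeasure ht htinj htdense (hA _),
    mu_eq_pathMeasure ht htinj htdense (MeasurableSet.iUnion hA)]
  exact tendsto_measure_iUnion_atTop hmono

end
end

section
/- The set function μ is a probability measure on the Borel σ-field of C: μ(A) ≥ 0 for every Borel A ⊆ C, μ(C) = 1, and for every sequence (A_i)_{i≥1} of pairwise disjoint Borel subsets of C one has μ(⋃_{i=1}^∞ A_i) = Σ_{i=1}^∞ μ(A_i). -/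
open MeasureTheory Matrix Set Filter Topology
open scoped ENNReal

noncomputable section

/-!
Wiener measure `P` on `C` is built as the law of the Lévy–Ciesielski series: independent standard
Gaussians times the primitives of the Haar functions. The fourth moment of the supremum norm of the
`n`-th dyadic level is `O(2⁻ⁿ)`, so the series converges uniformly almost surely. The covariance of
its partial sums increases to `min s t`, because the Brownian bridge covariance splits as a product
of tents plus two half-size bridge covariances on the two halves of the interval; comparing
characteristic functions, `P` projects to `ν_n` under every `π_n`.

A compact `K` is the decreasing intersection of the cylinders `π_n⁻¹(π_n(K))`: by compactness a
point of the intersection agrees with some point of `K` at all `t_k`, and these are dense. Hence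
`φ(K) = P(K)`, and inner regularity of `P` gives `μ = P` on Borel sets.
-/

open ProbabilityTheory

/-! ### The tent expansion of the Brownian covariance -/

/-- The tent `Λ` of height `1/2` over `[0, 1]`, the primitive of the Haar mother wavelet. -/
def tent (x : ℝ) : ℝ := max 0 (min x (1 - x))

/-- The nearest point of `[0, 1]`, used to extend functions on the interval to the line. -/
def unitClamp (x : ℝ) : ℝ := max 0 (min x 1)

/-- The covariance `min x y - x * y` of the Brownian bridge on `[0, 1]`, extended by `0` to the
plane. -/
def bridgeCov (x y : ℝ) : ℝ := min (unitClamp x) (unitClamp y) - unitClamp x * unitClamp y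

lemma continuous_tent : Continuous tent := by
  unfold tent
  fun_prop

lemma tent_nonneg (x : ℝ) : 0 ≤ tent x := le_max_left _ _

lemma tent_of_nonpos {x : ℝ} (hx : x ≤ 0) : tent x = 0 :=
  max_eq_left ((min_le_left _ _).trans hx)

lemma unitClamp_mem_Icc (x : ℝ) : unitClamp x ∈ Icc (0 : ℝ) 1 :=
  ⟨le_max_left _ _, max_le zero_le_one (min_le_right _ _)⟩

lemma unitClamp_of_mem_Icc {x : ℝ} (hx : x ∈ Icc (0 : ℝ) 1) : unitClamp x = x := by
  rw [unitClamp, min_eq_left hx.2, max_eq_right hx.1]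

lemma tent_le_unitClamp_sub (x : ℝ) : tent x ≤ unitClamp x - unitClamp (x - 1) := by
  grind [tent, unitClamp]

lemma bridgeCov_nonneg (x y : ℝ) : 0 ≤ bridgeCov x y := by
  obtain ⟨hx, hx'⟩ := unitClamp_mem_Icc x
  obtain ⟨hy, hy'⟩ := unitClamp_mem_Icc y
  exact sub_nonneg.2 (le_min (mul_le_of_le_one_right hx hy') (mul_le_of_le_one_left hy hx'))

lemma bridgeCov_le_unitClamp_sub (x y : ℝ) : bridgeCov x y ≤ unitClamp x - unitClamp (x - 1) := by
  obtain ⟨hy, hy'⟩ := unitClamp_mem_Icc y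
  rcases le_total x 1 with hx | hx
  · have hx1 : unitClamp (x - 1) = 0 := by grind [unitClamp]
    rw [hx1, sub_zero]
    exact (sub_le_self _ (mul_nonneg (unitClamp_mem_Icc x).1 hy)).trans (min_le_left _ _)
  · have hx1 : unitClamp x = 1 := by grind [unitClamp]
    rw [bridgeCov, hx1, one_mul, min_eq_right hy', sub_self]
    exact sub_nonneg.2 (unitClamp_mem_Icc _).2

lemma sum_range_unitClamp_sub_le_one (x : ℝ) (m : ℕ) :
    ∑ j ∈ Finset.range m, (unitClamp (x - j) - unitClamp (x - j - 1)) ≤ 1 := by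
  have telescope := Finset.sum_range_sub' (fun j : ℕ ↦ unitClamp (x - j)) m
  simp only [Nat.cast_add, Nat.cast_one, ← sub_sub] at telescope
  rw [telescope]
  linarith [(unitClamp_mem_Icc (x - (0 : ℕ))).2, (unitClamp_mem_Icc (x - m)).1]

lemma sum_range_tent_le_one (x : ℝ) (m : ℕ) : ∑ j ∈ Finset.range m, tent (x - j) ≤ 1 :=
  (Finset.sum_le_sum fun _ _ ↦ tent_le_unitClamp_sub _).trans (sum_range_unitClamp_sub_le_one x m)

lemma sum_range_bridgeCov_le_one (x y : ℝ) (m : ℕ) :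
    ∑ j ∈ Finset.range m, bridgeCov (x - j) (y - j) ≤ 1 :=
  (Finset.sum_le_sum fun _ _ ↦ bridgeCov_le_unitClamp_sub _ _).trans
    (sum_range_unitClamp_sub_le_one x m)

lemma min_eq_mul_add_bridgeCov {s t : ℝ} (hs : s ∈ Icc (0 : ℝ) 1) (ht : t ∈ Icc (0 : ℝ) 1) :
    min s t = s * t + bridgeCov s t := by
  rw [bridgeCov, unitClamp_of_mem_Icc hs, unitClamp_of_mem_Icc ht, add_sub_cancel]

lemma bridgeCov_comm (x y : ℝ) : bridgeCov x y = bridgeCov y x := by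
  rw [bridgeCov, bridgeCov, min_comm, mul_comm]

lemma two_mul_tent_le_one (x : ℝ) : 2 * tent x ≤ 1 := by
  grind [tent]

lemma unitClamp_eq_of_le_half {x : ℝ} (hx : x ≤ 1 / 2) :
    unitClamp x = tent x ∧ unitClamp (2 * x) = 2 * tent x ∧ unitClamp (2 * x - 1) = 0 := by
  grind [tent, unitClamp]

lemma unitClamp_eq_of_half_le {x : ℝ} (hx : 1 / 2 ≤ x) :
    unitClamp x = 1 - tent x ∧ unitClamp (2 * x) = 1 ∧ unitClamp (2 * x - 1) = 1 - 2 * tent x := by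
  grind [tent, unitClamp]

-- Conditioned on its midpoint, a Brownian bridge is two independent half-size bridges.
lemma bridgeCov_eq_tent_mul_tent_add (x y : ℝ) :
    bridgeCov x y =
      tent x * tent y + (bridgeCov (2 * x) (2 * y) + bridgeCov (2 * x - 1) (2 * y - 1)) / 2 := by
  wlog hxy : x ≤ y generalizing x y
  · rw [bridgeCov_comm x, bridgeCov_comm (2 * x), bridgeCov_comm (2 * x - 1), mul_comm (tent x)]
    exact this y x (le_of_not_ge hxy)
  rcases le_total y (1 / 2) with hy | hy
  · have hΛ : tent x ≤ tent y := max_le_max_left 0 (by grind)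
    obtain ⟨hx₁, hx₂, hx₃⟩ := unitClamp_eq_of_le_half (hxy.trans hy)
    obtain ⟨hy₁, hy₂, hy₃⟩ := unitClamp_eq_of_le_half hy
    rw [bridgeCov, bridgeCov, bridgeCov, hx₁, hx₂, hx₃, hy₁, hy₂, hy₃, min_eq_left hΛ,
      min_eq_left (by linarith), min_self]
    ring
  obtain ⟨hy₁, hy₂, hy₃⟩ := unitClamp_eq_of_half_le hy
  rcases le_total x (1 / 2) with hx | hx
  · obtain ⟨hx₁, hx₂, hx₃⟩ := unitClamp_eq_of_le_half hx
    rw [bridgeCov, bridgeCov, bridgeCov, hx₁, hx₂, hx₃, hy₁, hy₂, hy₃,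
      min_eq_left (by linarith [two_mul_tent_le_one x, two_mul_tent_le_one y]),
      min_eq_left (two_mul_tent_le_one x), min_eq_left (sub_nonneg.2 (two_mul_tent_le_one y))]
    ring
  · have hΛ : tent y ≤ tent x := max_le_max_left 0 (by grind)
    obtain ⟨hx₁, hx₂, hx₃⟩ := unitClamp_eq_of_half_le hx
    rw [bridgeCov, bridgeCov, bridgeCov, hx₁, hx₂, hx₃, hy₁, hy₂, hy₃,
      min_eq_left (by linarith), min_self, min_eq_left (by linarith)]
    ring

lemma sum_range_two_mul {M : Type*} [AddCommMonoid M] (f : ℕ → M) (m : ℕ) :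
    ∑ j ∈ Finset.range (2 * m), f j = ∑ j ∈ Finset.range m, (f (2 * j) + f (2 * j + 1)) := by
  induction m with
  | zero => simp
  | succ m ih =>
    rw [mul_add_one, Finset.sum_range_succ, Finset.sum_range_succ, ih, Finset.sum_range_succ,
      add_assoc]

lemma bridgeCov_eq_sum_tent_mul_tent_add (s t : ℝ) (N : ℕ) :
    bridgeCov s t =
      ∑ n ∈ Finset.range N, ∑ j ∈ Finset.range (2 ^ n),
        tent (2 ^ n * s - j) * tent (2 ^ n * t - j) / 2 ^ n +
      (∑ j ∈ Finset.range (2 ^ N), bridgeCov (2 ^ N * s - j) (2 ^ N * t - j)) / 2 ^ N := by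
  induction N with
  | zero => simp
  | succ N ih =>
    have halve (j : ℕ) : bridgeCov (2 ^ N * s - j) (2 ^ N * t - j) =
        tent (2 ^ N * s - j) * tent (2 ^ N * t - j) +
        (bridgeCov (2 ^ (N + 1) * s - (2 * j : ℕ)) (2 ^ (N + 1) * t - (2 * j : ℕ)) +
          bridgeCov (2 ^ (N + 1) * s - (2 * j + 1 : ℕ))
            (2 ^ (N + 1) * t - (2 * j + 1 : ℕ))) / 2 := by
      rw [bridgeCov_eq_tent_mul_tent_add]
      push_cast
      ring_nf
    rw [ih, Finset.sum_range_succ, Finset.sum_congr rfl fun j _ ↦ halve j, Finset.sum_add_distrib,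
      add_div, ← Finset.sum_div, ← Finset.sum_div, ← sum_range_two_mul fun j : ℕ ↦
        bridgeCov (2 ^ (N + 1) * s - j) (2 ^ (N + 1) * t - j), ← pow_succ', div_div, ← pow_succ']
    ring

lemma tendsto_sum_tent_mul_tent {s t : ℝ} (hs : s ∈ Icc (0 : ℝ) 1) (ht : t ∈ Icc (0 : ℝ) 1) :
    Tendsto (fun N ↦ s * t + ∑ n ∈ Finset.range N, ∑ j ∈ Finset.range (2 ^ n),
      tent (2 ^ n * s - j) * tent (2 ^ n * t - j) / 2 ^ n) atTop (𝓝 (min s t)) := by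
  have remainder : Tendsto (fun N : ℕ ↦
      (∑ j ∈ Finset.range (2 ^ N), bridgeCov (2 ^ N * s - j) (2 ^ N * t - j)) / 2 ^ N)
      atTop (𝓝 0) :=
    squeeze_zero
      (fun N ↦ div_nonneg (Finset.sum_nonneg fun _ _ ↦ bridgeCov_nonneg _ _) (by positivity))
      (fun N ↦ div_le_div_of_nonneg_right (sum_range_bridgeCov_le_one _ _ _) (by positivity))
      (by simpa [one_div, inv_pow] using
        tendsto_pow_atTop_nhds_zero_of_lt_one (r := (1 / 2 : ℝ)) (by norm_num) (by norm_num))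
  rw [min_eq_mul_add_bridgeCov hs ht, ← sub_zero (bridgeCov s t)]
  refine tendsto_const_nhds.add ((tendsto_const_nhds.sub remainder).congr fun N ↦ ?_)
  rw [bridgeCov_eq_sum_tent_mul_tent_add s t N, add_sub_cancel_right]

/-! ### Gaussian measures and characteristic functions -/

lemma prod_gaussianPDFReal_zero_one {ι : Type*} [Fintype ι] (u : ι → ℝ) :
    ∏ i, gaussianPDFReal 0 1 (u i) =
      (√(2 * Real.pi))⁻¹ ^ Fintype.card ι * Real.exp (-(u ⬝ᵥ u) / 2) := by
  simp only [gaussianPDFReal_def, NNReal.coe_one, mul_one, sub_zero, Finset.prod_mul_distrib,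
    Finset.prod_const, Finset.card_univ, ← Real.exp_sum, dotProduct, neg_div, Finset.sum_div,
    Finset.sum_neg_distrib, pow_two]

lemma pi_withDensity_ofReal_s15 {ι : Type*} [Fintype ι] {f : ι → ℝ → ℝ}
    (hf : ∀ i, Integrable (f i)) (hf₀ : ∀ i x, 0 ≤ f i x) :
    Measure.pi (fun i ↦ volume.withDensity fun x ↦ ENNReal.ofReal (f i x)) =
      volume.withDensity fun u : ι → ℝ ↦ ENNReal.ofReal (∏ i, f i (u i)) := by
  have (i : ι) : IsFiniteMeasure (volume.withDensity fun x ↦ ENNReal.ofReal (f i x)) :=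
    isFiniteMeasure_withDensity_ofReal (hf i).2
  refine Measure.pi_eq fun s hs ↦ ?_
  have integrable_prod : Integrable (fun u : ι → ℝ ↦ ∏ i, f i (u i))
      (Measure.pi fun i ↦ volume.restrict (s i)) :=
    Integrable.fintype_prod fun i ↦ (hf i).restrict
  rw [withDensity_apply _ (MeasurableSet.univ_pi hs), volume_pi, Measure.restrict_pi_pi,
    ← ofReal_integral_eq_lintegral_ofReal integrable_prod
      (ae_of_all _ fun u ↦ Finset.prod_nonneg fun i _ ↦ hf₀ i _),
    integral_fintype_prod_eq_prod,
    ENNReal.ofReal_prod_of_nonneg fun i _ ↦ integral_nonneg (hf₀ i)]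
  refine Finset.prod_congr rfl fun i _ ↦ ?_
  rw [withDensity_apply _ (hs i),
    ofReal_integral_eq_lintegral_ofReal (hf i).restrict (ae_of_all _ (hf₀ i))]

lemma pi_gaussianReal_zero_one_eq_withDensity (ι : Type*) [Fintype ι] :
    Measure.pi (fun _ : ι ↦ gaussianReal 0 1) = volume.withDensity fun u ↦
      ENNReal.ofReal ((√(2 * Real.pi))⁻¹ ^ Fintype.card ι * Real.exp (-(u ⬝ᵥ u) / 2)) := by
  simp only [← prod_gaussianPDFReal_zero_one, gaussianReal_of_var_ne_zero 0 one_ne_zero]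
  exact pi_withDensity_ofReal_s15 (fun _ ↦ integrable_gaussianPDFReal 0 1)
    fun _ ↦ gaussianPDFReal_nonneg 0 1

section

variable {ι : Type*} [Fintype ι] [DecidableEq ι] {A : Matrix ι ι ℝ}

lemma mulVec_dotProduct_inv_mul_transpose_mulVec (hA : A.det ≠ 0) (u : ι → ℝ) :
    (A *ᵥ u) ⬝ᵥ (A * Aᵀ)⁻¹ *ᵥ (A *ᵥ u) = u ⬝ᵥ u := by
  have inv_mul : A⁻¹ * A = 1 := nonsing_inv_mul A (isUnit_iff_ne_zero.2 hA)
  rw [Matrix.mul_inv_rev, mulVec_mulVec, Matrix.mul_assoc, inv_mul, Matrix.mul_one,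
    dotProduct_mulVec, vecMul_mulVec, ← transpose_nonsing_inv, ← transpose_mul, inv_mul,
    transpose_one, vecMul_one]

lemma rpow_neg_half_two_pi_pow_mul_det (A : Matrix ι ι ℝ) (n : ℕ) :
    ((2 * Real.pi) ^ n * (A * Aᵀ).det) ^ (-(1 : ℝ) / 2) =
      |A.det|⁻¹ * (√(2 * Real.pi))⁻¹ ^ n := by
  rw [det_mul, det_transpose, neg_div, Real.rpow_neg (by positivity [mul_self_nonneg A.det]),
    ← Real.sqrt_eq_rpow, Real.sqrt_mul (by positivity), Real.sqrt_mul_self_eq_abs, mul_inv,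
    inv_pow, mul_comm, Real.sqrt_eq_rpow, Real.sqrt_eq_rpow, Real.rpow_pow_comm (by positivity)]

lemma withDensity_eq_map_mulVec (hA : A.det ≠ 0) {g : (ι → ℝ) → ℝ≥0∞} (hg : Measurable g) :
    volume.withDensity g =
      (volume.withDensity fun u ↦ ENNReal.ofReal |A.det| * g (A *ᵥ u)).map (A *ᵥ ·) := by
  have measurable_mulVec : Measurable (A *ᵥ · : (ι → ℝ) → ι → ℝ) := by fun_prop
  have volume_eq : (volume : Measure (ι → ℝ)) =
      ENNReal.ofReal |A.det| • volume.map (A *ᵥ ·) := by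
    rw [show volume.map (A *ᵥ ·) = _ from Real.map_matrix_volume_pi_eq_smul_volume_pi hA,
      smul_smul, ← ENNReal.ofReal_mul (abs_nonneg _), ← abs_mul, mul_inv_cancel₀ hA, abs_one,
      ENNReal.ofReal_one, one_smul]
  ext s hs
  rw [Measure.map_apply measurable_mulVec hs, withDensity_apply _ hs,
    withDensity_apply _ (measurable_mulVec hs)]
  conv_lhs => rw [volume_eq]
  rw [Measure.restrict_smul, lintegral_smul_measure, setLIntegral_map hs hg measurable_mulVec,
    smul_eq_mul, lintegral_const_mul' _ _ ENNReal.ofReal_ne_top]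

end

lemma gauss_mul_transpose {n : ℕ} {A : Matrix (Fin n) (Fin n) ℝ} (hA : A.det ≠ 0) :
    gauss n (A * Aᵀ) = (Measure.pi fun _ ↦ gaussianReal 0 1).map (A *ᵥ ·) := by
  have measurable_quadratic : Measurable fun u ↦ u ⬝ᵥ (A * Aᵀ)⁻¹ *ᵥ u := by
    fun_prop
  rw [gauss, withDensity_eq_map_mulVec hA (by fun_prop), pi_gaussianReal_zero_one_eq_withDensity]
  congr! 3
  rw [← ENNReal.ofReal_mul (abs_nonneg _), mulVec_dotProduct_inv_mul_transpose_mulVec hA,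
    rpow_neg_half_two_pi_pow_mul_det, Fintype.card_fin, mul_assoc,
    mul_inv_cancel_left₀ (abs_ne_zero.2 hA)]

open scoped MatrixOrder in
lemma exists_eq_mul_transpose_of_posDef {ι : Type*} [Fintype ι] [DecidableEq ι]
    {M : Matrix ι ι ℝ} (hM : M.PosDef) : ∃ A : Matrix ι ι ℝ, A.det ≠ 0 ∧ M = A * Aᵀ := by
  obtain ⟨B, hB⟩ := CStarAlgebra.nonneg_iff_eq_star_mul_self.1 hM.posSemidef.nonneg
  refine ⟨Bᵀ, ?_, by rw [hB, transpose_transpose]; rfl⟩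
  rw [det_transpose]
  exact right_ne_zero_of_mul (det_mul (star B) B ▸ hB ▸ hM.det_pos.ne')

lemma isProbabilityMeasure_gauss {n : ℕ} {M : Matrix (Fin n) (Fin n) ℝ} (hM : M.PosDef) :
    IsProbabilityMeasure (gauss n M) := by
  obtain ⟨A, hA, rfl⟩ := exists_eq_mul_transpose_of_posDef hM
  rw [gauss_mul_transpose hA]
  exact Measure.isProbabilityMeasure_map (by fun_prop)

lemma charFun_map_sum_mul_infinitePi_gaussianReal {ι : Type*} (c : ι → ℝ) (s : Finset ι) (x : ℝ) :
    charFun ((Measure.infinitePi fun _ : ι ↦ gaussianReal 0 1).map fun ω ↦ ∑ i ∈ s, c i * ω i) x =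
      Complex.exp (-(∑ i ∈ s, c i ^ 2 : ℝ) * x ^ 2 / 2) := by
  have indep : iIndepFun (fun i ω ↦ c i * ω i) (Measure.infinitePi fun _ ↦ gaussianReal 0 1) :=
    iIndepFun_infinitePi (X := fun i y ↦ c i * y) fun i ↦ by fun_prop
  have law (i : ι) : (Measure.infinitePi fun _ : ι ↦ gaussianReal 0 1).map (fun ω ↦ c i * ω i) =
      gaussianReal 0 (.mk (c i ^ 2) (sq_nonneg _)) := by
    rw [← Function.comp_def (c i * ·), ← Measure.map_map (by fun_prop) (by fun_prop),
      Measure.infinitePi_map_eval, gaussianReal_map_const_mul, mul_zero, mul_one]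
  rw [(indep.restrict s).charFun_map_fun_finsetSum_eq_prod
      fun i _ ↦ Measurable.aemeasurable (by fun_prop),
    Finset.prod_apply]
  simp [law, charFun_gaussianReal, ← Complex.exp_sum, neg_div, Finset.sum_mul, Finset.sum_div]

lemma sum_sum_mul_sq_eq_dotProduct {ι κ : Type*} [Fintype κ] (a : κ → ι → ℝ) (s : Finset ι)
    (v : κ → ℝ) :
    ∑ i ∈ s, (∑ k, v k * a k i) ^ 2 = v ⬝ᵥ of (fun k l ↦ ∑ i ∈ s, a k i * a l i) *ᵥ v := by
  simp only [dotProduct, mulVec, of_apply, sq, Finset.sum_mul, Finset.mul_sum]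
  rw [Finset.sum_comm]
  refine Finset.sum_congr rfl fun k _ ↦ ?_
  rw [Finset.sum_comm]
  exact Finset.sum_congr rfl fun l _ ↦ Finset.sum_congr rfl fun i _ ↦ by ring

lemma charFunDual_map_sum_mul_infinitePi_gaussianReal {ι κ : Type*} [Fintype κ] [DecidableEq κ]
    (a : κ → ι → ℝ) (s : Finset ι) (L : StrongDual ℝ (κ → ℝ)) :
    charFunDual
        ((Measure.infinitePi fun _ : ι ↦ gaussianReal 0 1).map fun ω k ↦ ∑ i ∈ s, a k i * ω i) L =
      Complex.exp (-((fun k ↦ L (Pi.single k 1)) ⬝ᵥ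
        of (fun k l ↦ ∑ i ∈ s, a k i * a l i) *ᵥ fun k ↦ L (Pi.single k 1) : ℝ) / 2) := by
  have apply_eq (ω : ι → ℝ) : L (fun k ↦ ∑ i ∈ s, a k i * ω i) =
      ∑ i ∈ s, (∑ k, L (Pi.single k 1) * a k i) * ω i := by
    rw [pi_eq_sum_univ' fun k ↦ ∑ i ∈ s, a k i * ω i]
    simp only [map_sum, map_smul, smul_eq_mul, Finset.sum_mul]
    rw [Finset.sum_comm]
    exact Finset.sum_congr rfl fun i _ ↦ Finset.sum_congr rfl fun k _ ↦ by ring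
  rw [charFunDual_eq_charFun_map_one, Measure.map_map (by fun_prop) (by fun_prop),
    funext (f := L ∘ _) apply_eq, charFun_map_sum_mul_infinitePi_gaussianReal,
    sum_sum_mul_sq_eq_dotProduct]
  simp

lemma charFunDual_gauss {n : ℕ} {M : Matrix (Fin n) (Fin n) ℝ} (hM : M.PosDef)
    (L : StrongDual ℝ (Fin n → ℝ)) :
    charFunDual (gauss n M) L = Complex.exp
      (-((fun k ↦ L (Pi.single k 1)) ⬝ᵥ M *ᵥ fun k ↦ L (Pi.single k 1) : ℝ) / 2) := by
  obtain ⟨A, hA, rfl⟩ := exists_eq_mul_transpose_of_posDef hM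
  rw [gauss_mul_transpose hA, ← Measure.infinitePi_eq_pi]
  exact charFunDual_map_sum_mul_infinitePi_gaussianReal A Finset.univ L

lemma tendsto_charFunDual_map_of_tendsto_ae {Ω E : Type*} [MeasurableSpace Ω] {P : Measure Ω}
    [IsFiniteMeasure P] [NormedAddCommGroup E] [NormedSpace ℝ E] [MeasurableSpace E]
    [BorelSpace E] {X : ℕ → Ω → E} {Y : Ω → E} (hX : ∀ n, AEMeasurable (X n) P)
    (hY : AEMeasurable Y P) (h : ∀ᵐ ω ∂P, Tendsto (X · ω) atTop (𝓝 (Y ω)))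
    (L : StrongDual ℝ E) :
    Tendsto (fun n ↦ charFunDual (P.map (X n)) L) atTop (𝓝 (charFunDual (P.map Y) L)) := by
  have charFunDual_eq {Z : Ω → E} (hZ : AEMeasurable Z P) :
      charFunDual (P.map Z) L = ∫ ω, Complex.exp (L (Z ω) * Complex.I) ∂P := by
    rw [charFunDual_apply, integral_map hZ (by fun_prop)]
  have continuous_exp : Continuous fun x : E ↦ Complex.exp (L x * Complex.I) := by fun_prop
  simp only [charFunDual_eq hY, charFunDual_eq (hX _)]
  refine tendsto_integral_of_dominated_convergence (fun _ ↦ 1)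
    (fun n ↦ (continuous_exp.measurable.comp_aemeasurable (hX n)).aestronglyMeasurable)
    (integrable_const 1) (fun n ↦ ae_of_all _ fun ω ↦ (Complex.norm_exp_ofReal_mul_I _).le) ?_
  filter_upwards [h] with ω hω using (continuous_exp.tendsto _).comp hω

/-! ### Positive definiteness of `min (t i) (t j)` -/

section

variable {ι : Type*} {t : ι → ℝ} {s : Finset ι}

-- Peeling off the smallest time leaves a quadratic form of the same shape and a square.
lemma sum_insert_min_sub_mul [DecidableEq ι] {a : ι} (has : a ∉ s) (hat : ∀ i ∈ s, t a ≤ t i)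
    (c : ℝ) (v : ι → ℝ) :
    ∑ i ∈ insert a s, ∑ j ∈ insert a s, (min (t i) (t j) - c) * (v i * v j) =
      (t a - c) * (∑ i ∈ insert a s, v i) ^ 2 +
        ∑ i ∈ s, ∑ j ∈ s, (min (t i) (t j) - t a) * (v i * v j) := by
  have split (i j : ι) : (min (t i) (t j) - c) * (v i * v j) =
      (t a - c) * (v i * v j) + (min (t i) (t j) - t a) * (v i * v j) := by
    ring
  have row : ∑ j ∈ insert a s, (min (t a) (t j) - t a) * (v a * v j) = 0 :=
    Finset.sum_eq_zero fun j hj ↦ by grind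
  have column (i) (hi : i ∈ s) : (min (t i) (t a) - t a) * (v i * v a) = 0 := by
    rw [min_eq_right (hat i hi), sub_self, zero_mul]
  simp only [split, Finset.sum_add_distrib, ← Finset.mul_sum, sq, Finset.sum_mul_sum]
  rw [Finset.sum_insert has (f := fun i ↦ ∑ j ∈ insert a s, (min (t i) (t j) - t a) * (v i * v j)),
    row, zero_add]
  congr 1
  refine Finset.sum_congr rfl fun i hi ↦ ?_
  rw [Finset.sum_insert has, column i hi, zero_add]

lemma sum_min_sub_mul_pos (ht : InjOn t s) {c : ℝ} (hc : ∀ i ∈ s, c < t i) {v : ι → ℝ}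
    (hv : ∃ i ∈ s, v i ≠ 0) : 0 < ∑ i ∈ s, ∑ j ∈ s, (min (t i) (t j) - c) * (v i * v j) := by
  classical
  induction s using Finset.induction_on_min_value t generalizing c with
  | empty => simp at hv
  | insert a s has hat ih =>
    rw [sum_insert_min_sub_mul has hat]
    have hca : 0 < t a - c := sub_pos.2 (hc a (Finset.mem_insert_self a s))
    have hlt (i) (hi : i ∈ s) : t a < t i :=
      (hat i hi).lt_of_ne fun h ↦ has (ht (by simp) (by simp [hi]) h ▸ hi)
    by_cases hvs : ∃ i ∈ s, v i ≠ 0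
    · exact add_pos_of_nonneg_of_pos (by positivity) (ih (ht.mono (by simp)) hlt hvs)
    · push Not at hvs
      have hva : v a ≠ 0 := by grind
      rw [Finset.sum_insert has, Finset.sum_eq_zero hvs, add_zero,
        Finset.sum_eq_zero (s := s) fun i hi ↦ Finset.sum_eq_zero fun j _ ↦ by simp [hvs i hi],
        add_zero]
      positivity

end

lemma posDef_of_min {ι : Type*} [Finite ι] {t : ι → ℝ} (ht : Function.Injective t)
    (ht₀ : ∀ i, 0 < t i) : (of fun i j ↦ min (t i) (t j)).PosDef := by
  cases nonempty_fintype ι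
  refine .of_dotProduct_mulVec_pos (.ext fun i j ↦ min_comm _ _) fun v hv ↦ ?_
  have pos := sum_min_sub_mul_pos (s := Finset.univ) (v := v) ht.injOn (fun i _ ↦ ht₀ i)
    (by simpa using Function.ne_iff.1 hv)
  simpa [dotProduct, mulVec, Finset.mul_sum, mul_comm, mul_left_comm, mul_assoc] using pos

lemma posDef_covM {t : ℕ → ℝ} (ht : ∀ k, 0 < t k) (htinj : Function.Injective t) (n : ℕ) :
    (covM t n).PosDef :=
  posDef_of_min (htinj.comp Fin.val_injective) fun i ↦ ht i

/-! ### Compact sets and finite-dimensional projections -/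

lemma denseRange_subtype_mk_of_subset_closure {ι X : Type*} [TopologicalSpace X] {S : Set X}
    {f : ι → X} (hf : ∀ i, f i ∈ S) (hS : S ⊆ closure (range f)) :
    DenseRange fun i ↦ (⟨f i, hf i⟩ : S) := by
  rw [DenseRange, Subtype.dense_iff]
  convert hS using 2
  rw [← range_comp, Function.comp_def]

/-! ### The Lévy–Ciesielski series -/

lemma enorm_pi_rpow_le_sum {ι : Type*} [Fintype ι] {E : ι → Type*}
    [∀ i, SeminormedAddCommGroup (E i)] (x : ∀ i, E i) {p : ℝ} (hp : 0 < p) :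
    ‖x‖ₑ ^ p ≤ ∑ i, ‖x i‖ₑ ^ p := by
  rcases isEmpty_or_nonempty ι
  · simp [enorm_eq_nnnorm, Pi.nnnorm_def, hp]
  · obtain ⟨i, -, hi⟩ := Finset.exists_mem_eq_sup Finset.univ Finset.univ_nonempty (‖x ·‖₊)
    rw [enorm_eq_nnnorm, Pi.nnnorm_def, hi]
    exact Finset.single_le_sum (f := fun i ↦ ‖x i‖ₑ ^ p) (fun _ _ ↦ zero_le) (Finset.mem_univ i)

lemma eLpNorm_pi_le {Ω ι E : Type*} [MeasurableSpace Ω] {P : Measure Ω} [Fintype ι]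
    [NormedAddCommGroup E] {X : Ω → ι → E} (hX : ∀ i, AEStronglyMeasurable (fun ω ↦ X ω i) P)
    {p C : ℝ≥0∞} (hp₀ : p ≠ 0) (hp : p ≠ ∞) (hC : ∀ i, eLpNorm (fun ω ↦ X ω i) p P ≤ C) :
    eLpNorm X p P ≤ (Fintype.card ι : ℝ≥0∞) ^ (1 / p.toReal) * C := by
  have hq : 0 < p.toReal := ENNReal.toReal_pos hp₀ hp
  have lintegral_le (i : ι) : ∫⁻ ω, ‖X ω i‖ₑ ^ p.toReal ∂P ≤ C ^ p.toReal := by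
    rw [← ENNReal.rpow_inv_le_iff hq, ← one_div, ← eLpNorm_eq_lintegral_rpow_enorm_toReal hp₀ hp]
    exact hC i
  calc eLpNorm X p P = (∫⁻ ω, ‖X ω‖ₑ ^ p.toReal ∂P) ^ (1 / p.toReal) :=
        eLpNorm_eq_lintegral_rpow_enorm_toReal hp₀ hp
    _ ≤ (∑ i, ∫⁻ ω, ‖X ω i‖ₑ ^ p.toReal ∂P) ^ (1 / p.toReal) := by
        rw [← lintegral_finsetSum' _ fun i _ ↦ (hX i).enorm.pow_const _]
        gcongr with ω
        exact enorm_pi_rpow_le_sum (X ω) hq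
    _ ≤ (Fintype.card ι * C ^ p.toReal) ^ (1 / p.toReal) := by
        gcongr
        simpa using Finset.sum_le_sum fun i (_ : i ∈ Finset.univ) ↦ lintegral_le i
    _ = (Fintype.card ι : ℝ≥0∞) ^ (1 / p.toReal) * C := by
        rw [ENNReal.mul_rpow_of_nonneg _ _ (by positivity), ← ENNReal.rpow_mul,
          mul_one_div_cancel hq.ne', ENNReal.rpow_one]

/-- The index set of the Haar basis of `L²[0, 1]`: `none` stands for the constant function and
`some ⟨n, j⟩` for the wavelet supported on `[j / 2 ^ n, (j + 1) / 2 ^ n]`. -/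
abbrev HaarIndex : Type := Option (Σ n : ℕ, Fin (2 ^ n))

/-- The primitives of the Haar functions, which independent Gaussians multiply in the
Lévy–Ciesielski series. -/
def schauder : HaarIndex → C(Icc (0 : ℝ) 1, ℝ)
  | none => ⟨fun x ↦ x, continuous_subtype_val⟩
  | some ⟨n, j⟩ => ⟨fun x ↦ (√2)⁻¹ ^ n * tent (2 ^ n * x - (j : ℕ)),
      continuous_const.mul (continuous_tent.comp (by fun_prop))⟩

/-- The indices of the constant function and of the wavelets of the first `N` dyadic levels. -/
def haarLevels (N : ℕ) : Finset HaarIndex :=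
  Finset.insertNone ((Finset.range N).sigma fun _ ↦ Finset.univ)

lemma sum_haarLevels {M : Type*} [AddCommMonoid M] (f : HaarIndex → M) (N : ℕ) :
    ∑ i ∈ haarLevels N, f i = f none + ∑ n ∈ Finset.range N, ∑ j, f (some ⟨n, j⟩) := by
  rw [haarLevels, Finset.sum_insertNone, Finset.sum_sigma]

lemma schauder_zero (i : HaarIndex) : schauder i ⟨0, ⟨le_refl 0, zero_le_one⟩⟩ = 0 := by
  match i with
  | none => rfl
  | some ⟨n, j⟩ => simp [schauder, tent_of_nonpos]

lemma norm_sum_smul_schauder_le (n : ℕ) (c : Fin (2 ^ n) → ℝ) :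
    ‖∑ j, c j • schauder (some ⟨n, j⟩)‖ ≤ (√2)⁻¹ ^ n * ‖c‖ := by
  refine (ContinuousMap.norm_le _ (by positivity)).2 fun x ↦ ?_
  calc ‖(∑ j, c j • schauder (some ⟨n, j⟩)) x‖
      ≤ ∑ j : Fin (2 ^ n), (√2)⁻¹ ^ n * ‖c‖ * tent (2 ^ n * x - (j : ℕ)) := by
        rw [ContinuousMap.sum_apply]
        refine norm_sum_le_of_le _ fun j _ ↦ ?_
        have tent_nonneg := tent_nonneg (2 ^ n * x - (j : ℕ))
        simp only [ContinuousMap.smul_apply, schauder, ContinuousMap.coe_mk, smul_eq_mul, norm_mul,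
          Real.norm_of_nonneg tent_nonneg, norm_pow, norm_inv,
          Real.norm_of_nonneg (Real.sqrt_nonneg 2)]
        rw [← mul_assoc, mul_comm ‖c j‖]
        gcongr
        exact norm_le_pi_norm c j
    _ = (√2)⁻¹ ^ n * ‖c‖ * ∑ j ∈ Finset.range (2 ^ n), tent (2 ^ n * x - j) := by
        rw [← Finset.mul_sum, Fin.sum_univ_eq_sum_range fun j : ℕ ↦ tent (2 ^ n * x - j)]
    _ ≤ (√2)⁻¹ ^ n * ‖c‖ :=
        mul_le_of_le_one_right (by positivity) (sum_range_tent_le_one _ _)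

lemma tendsto_sum_schauder_mul_schauder (s t : Icc (0 : ℝ) 1) :
    Tendsto (fun N ↦ ∑ i ∈ haarLevels N, schauder i s * schauder i t) atTop
      (𝓝 (min (s : ℝ) t)) := by
  refine (tendsto_sum_tent_mul_tent s.2 t.2).congr fun N ↦ ?_
  rw [sum_haarLevels]
  refine congrArg₂ _ rfl (Finset.sum_congr rfl fun n _ ↦ ?_)
  rw [Finset.sum_range]
  refine Finset.sum_congr rfl fun j _ ↦ ?_
  have sq_scale : (√2)⁻¹ ^ n * (√2)⁻¹ ^ n = ((2 : ℝ) ^ n)⁻¹ := by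
    rw [← mul_pow, ← mul_inv, Real.mul_self_sqrt zero_le_two, inv_pow]
  simp only [schauder, ContinuousMap.coe_mk]
  rw [mul_mul_mul_comm, sq_scale, div_eq_inv_mul]

/-- The law of an i.i.d. family of standard Gaussian coefficients, one for each Haar function. -/
def haarNoise : Measure (HaarIndex → ℝ) := Measure.infinitePi fun _ ↦ gaussianReal 0 1

instance : IsProbabilityMeasure haarNoise := by
  unfold haarNoise
  infer_instance

lemma eLpNorm_eval_haarNoise (i : HaarIndex) (p : ℝ≥0∞) :
    eLpNorm (fun ω ↦ ω i) p haarNoise = eLpNorm id p (gaussianReal 0 1) :=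
  eLpNorm_comp_measurePreserving (g := id) (by fun_prop) (measurePreserving_eval_infinitePi _ i)

-- Any exponent `p > 2` in place of `4` gives a convergent geometric series.
lemma eLpNorm_sum_smul_schauder_le (n : ℕ) :
    eLpNorm (fun ω ↦ ∑ j, ω (some ⟨n, j⟩) • schauder (some ⟨n, j⟩)) 4 haarNoise ≤
      ((2 : ℝ≥0∞) ^ (-(1 / 4) : ℝ)) ^ n * eLpNorm id 4 (gaussianReal 0 1) := by
  have scale : ENNReal.ofReal ((√2)⁻¹ ^ n) * ((2 ^ n : ℕ) : ℝ≥0∞) ^ (1 / 4 : ℝ) =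
      ((2 : ℝ≥0∞) ^ (-(1 / 4) : ℝ)) ^ n := by
    rw [ENNReal.ofReal_pow (by positivity), Real.sqrt_eq_rpow, ← Real.rpow_neg zero_le_two,
      ← ENNReal.ofReal_rpow_of_pos zero_lt_two, ENNReal.ofReal_ofNat, Nat.cast_pow, Nat.cast_ofNat,
      ← ENNReal.rpow_natCast, ← ENNReal.rpow_natCast, ← ENNReal.rpow_natCast, ← ENNReal.rpow_mul,
      ← ENNReal.rpow_mul, ← ENNReal.rpow_mul, ← ENNReal.rpow_add _ _ two_ne_zero (by simp)]
    ring_nf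
  have pi_le := eLpNorm_pi_le (X := fun (ω : HaarIndex → ℝ) (j : Fin (2 ^ n)) ↦ ω (some ⟨n, j⟩))
    (P := haarNoise) (p := 4) (fun j ↦ (measurable_pi_apply _).aestronglyMeasurable)
    (by simp) (by simp)
    fun j ↦ (eLpNorm_eval_haarNoise _ _).le
  calc _ ≤ ENNReal.ofReal ((√2)⁻¹ ^ n) *
        eLpNorm (fun ω (j : Fin (2 ^ n)) ↦ ω (some ⟨n, j⟩)) 4 haarNoise :=
        eLpNorm_le_mul_eLpNorm_of_ae_le_mul (ae_of_all _ fun ω ↦ norm_sum_smul_schauder_le n _) 4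
    _ ≤ _ := by
        grw [pi_le]
        rw [Fintype.card_fin, ← mul_assoc, ENNReal.toReal_ofNat, scale]

lemma ae_summable_norm_sum_smul_schauder :
    ∀ᵐ ω ∂haarNoise, Summable fun n ↦ ‖∑ j, ω (some ⟨n, j⟩) • schauder (some ⟨n, j⟩)‖ := by
  refine summable_norm_of_tsum_eLpNorm_ne_top (p := 4) (by norm_num) (fun n ↦ ?_) ?_
  · exact Finset.aestronglyMeasurable_fun_sum _ fun j _ ↦
      (measurable_pi_apply _).aestronglyMeasurable.smul_const _
  · refine ne_top_of_le_ne_top ?_ (ENNReal.tsum_le_tsum eLpNorm_sum_smul_schauder_le)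
    rw [ENNReal.tsum_mul_right, ENNReal.tsum_geometric]
    refine ENNReal.mul_ne_top (ENNReal.inv_ne_top.2 (tsub_pos_of_lt ?_).ne')
      (memLp_id_gaussianReal' 4 (by simp)).eLpNorm_ne_top
    exact ENNReal.rpow_lt_one_of_one_lt_of_neg (by norm_num) (by norm_num)

/-- The partial sum of the Lévy–Ciesielski series over the first `N` dyadic levels, with
coefficients `ω`. -/
def schauderSum (N : ℕ) (ω : HaarIndex → ℝ) : Cz :=
  ⟨∑ i ∈ haarLevels N, ω i • schauder i, by simp [schauder_zero]⟩

lemma dist_schauderSum_succ (N : ℕ) (ω : HaarIndex → ℝ) :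
    dist (schauderSum N ω) (schauderSum (N + 1) ω) =
      ‖∑ j, ω (some ⟨N, j⟩) • schauder (some ⟨N, j⟩)‖ := by
  have coe_schauderSum_succ : (schauderSum (N + 1) ω : C(Icc (0 : ℝ) 1, ℝ)) =
      schauderSum N ω + ∑ j, ω (some ⟨N, j⟩) • schauder (some ⟨N, j⟩) := by
    simp only [schauderSum, sum_haarLevels, Finset.sum_range_succ, add_assoc]
  rw [Subtype.dist_eq, coe_schauderSum_succ, dist_self_add_right]

lemma measurable_schauderSum (N : ℕ) : Measurable (schauderSum N) :=
  (Continuous.subtype_mk (by fun_prop) _).measurable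

instance : CompleteSpace Cz :=
  (isClosed_eq (continuous_eval_const _) continuous_const).completeSpace_coe

lemma exists_measurable_tendsto_schauderSum : ∃ W : (HaarIndex → ℝ) → Cz, Measurable W ∧
    ∀ᵐ ω ∂haarNoise, Tendsto (schauderSum · ω) atTop (𝓝 (W ω)) := by
  refine measurable_limit_of_tendsto_metrizable_ae (fun N ↦ (measurable_schauderSum N).aemeasurable)
    ?_
  filter_upwards [ae_summable_norm_sum_smul_schauder] with ω hω
  refine cauchySeq_tendsto_of_complete (cauchySeq_of_summable_dist ?_)
  simpa only [dist_schauderSum_succ] using hω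

lemma iInter_preimage_image_of_isCompact {X : Type*} [TopologicalSpace X] [T2Space X]
    {Y : ℕ → Type*} [∀ n, TopologicalSpace (Y n)] [∀ n, T2Space (Y n)] {p : ∀ n, X → Y n}
    (hp : ∀ n, Continuous (p n)) (refine_succ : ∀ n x y, p (n + 1) x = p (n + 1) y → p n x = p n y)
    (separates : ∀ x y, (∀ n, p n x = p n y) → x = y) {K : Set X} (hK : IsCompact K) :
    ⋂ n, p n ⁻¹' (p n '' K) = K := by
  refine Subset.antisymm (fun x hx ↦ ?_) (subset_iInter fun n ↦ subset_preimage_image _ _)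
  have closed_fibre (n : ℕ) : IsClosed (p n ⁻¹' {p n x}) := isClosed_singleton.preimage (hp n)
  obtain ⟨y, hy⟩ := IsCompact.nonempty_iInter_of_sequence_nonempty_isCompact_isClosed
    (fun n ↦ K ∩ p n ⁻¹' {p n x}) (fun n ↦ inter_subset_inter_right _ fun y ↦ refine_succ n y x)
    (fun n ↦ mem_iInter.1 hx n) (hK.inter_right (closed_fibre 0))
    (fun n ↦ hK.isClosed.inter (closed_fibre n))
  rw [← separates y x fun n ↦ (mem_iInter.1 hy n).2]
  exact (mem_iInter.1 hy 0).1

lemma measure_eq_iInf_map_image_of_isCompact {X : Type*} [TopologicalSpace X] [T2Space X]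
    [MeasurableSpace X] [BorelSpace X] {P : Measure X} [IsFiniteMeasure P]
    {Y : ℕ → Type*} [∀ n, TopologicalSpace (Y n)] [∀ n, T2Space (Y n)]
    [∀ n, MeasurableSpace (Y n)] [∀ n, BorelSpace (Y n)] {p : ∀ n, X → Y n}
    (hp : ∀ n, Continuous (p n)) (refine_succ : ∀ n x y, p (n + 1) x = p (n + 1) y → p n x = p n y)
    (separates : ∀ x y, (∀ n, p n x = p n y) → x = y) {K : Set X} (hK : IsCompact K) :
    P K = ⨅ n, P.map (p n) (p n '' K) := by
  have measurableSet_image (n : ℕ) : MeasurableSet (p n '' K) :=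
    (hK.image (hp n)).isClosed.measurableSet
  have antitone_preimage : Antitone fun n ↦ p n ⁻¹' (p n '' K) :=
    antitone_nat_of_succ_le fun n x ⟨y, hy, hyx⟩ ↦ ⟨y, hy, refine_succ n y x hyx⟩
  conv_lhs => rw [← iInter_preimage_image_of_isCompact hp refine_succ separates hK]
  rw [antitone_preimage.measure_iInter
    (fun n ↦ ((hp n).measurable (measurableSet_image n)).nullMeasurableSet)
    ⟨0, measure_ne_top P _⟩]
  simp only [Measure.map_apply (hp _).measurable (measurableSet_image _)]

section

variable {t : ℕ → ℝ} (ht : ∀ k, t k ∈ Ioc (0 : ℝ) 1)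

lemma continuous_proj (n : ℕ) : Continuous (proj t ht n) :=
  continuous_pi fun _ ↦ (continuous_eval_const _).comp continuous_subtype_val

lemma map_proj_map_eq_gauss_of_tendsto_schauderSum (htinj : Function.Injective t)
    {W : (HaarIndex → ℝ) → Cz} (hW : Measurable W)
    (hlim : ∀ᵐ ω ∂haarNoise, Tendsto (schauderSum · ω) atTop (𝓝 (W ω))) (n : ℕ) :
    (haarNoise.map W).map (proj t ht n) = gauss n (covM t n) := by
  have hcov : (covM t n).PosDef := posDef_covM (fun k ↦ (ht k).1) htinj n
  have := isProbabilityMeasure_gauss hcov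
  have hproj := continuous_proj ht n
  set a : Fin n → HaarIndex → ℝ := fun k i ↦ schauder i ⟨t k, Ioc_subset_Icc_self (ht k)⟩
  have proj_schauderSum (N : ℕ) :
      proj t ht n ∘ schauderSum N = fun ω k ↦ ∑ i ∈ haarLevels N, a k i * ω i := by
    ext ω k
    simp [proj, schauderSum, a, ContinuousMap.sum_apply, mul_comm]
  have tendsto_covariance : Tendsto
      (fun N ↦ of fun k l ↦ ∑ i ∈ haarLevels N, a k i * a l i) atTop (𝓝 (covM t n)) :=
    tendsto_pi_nhds.2 fun k ↦ tendsto_pi_nhds.2 fun l ↦ tendsto_sum_schauder_mul_schauder _ _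
  rw [Measure.map_map hproj.measurable hW]
  refine Measure.ext_of_charFunDual (funext fun L ↦ ?_)
  refine tendsto_nhds_unique (tendsto_charFunDual_map_of_tendsto_ae
    (X := fun N ↦ proj t ht n ∘ schauderSum N)
    (fun N ↦ (hproj.measurable.comp (measurable_schauderSum N)).aemeasurable)
    (hproj.measurable.comp hW).aemeasurable ?_ L) ?_
  · filter_upwards [hlim] with ω hω using (hproj.tendsto _).comp hω
  · simp only [proj_schauderSum, haarNoise, charFunDual_map_sum_mul_infinitePi_gaussianReal]
    rw [charFunDual_gauss hcov]
    have continuous_exp : Continuous fun M : Matrix (Fin n) (Fin n) ℝ ↦ Complex.exp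
        (-((fun k ↦ L (Pi.single k 1)) ⬝ᵥ M *ᵥ fun k ↦ L (Pi.single k 1) : ℝ) / 2) := by
      fun_prop
    exact (continuous_exp.tendsto _).comp tendsto_covariance

lemma exists_isProbabilityMeasure_map_proj_eq_gauss (htinj : Function.Injective t) :
    ∃ P : Measure Cz, IsProbabilityMeasure P ∧
      ∀ n, P.map (proj t ht n) = gauss n (covM t n) := by
  obtain ⟨W, hW, hlim⟩ := exists_measurable_tendsto_schauderSum
  exact ⟨haarNoise.map W, Measure.isProbabilityMeasure_map hW.aemeasurable,
    map_proj_map_eq_gauss_of_tendsto_schauderSum ht htinj hW hlim⟩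

lemma eq_of_forall_proj_succ_eq (htdense : Icc (0 : ℝ) 1 ⊆ closure (range t)) {x y : Cz}
    (hxy : ∀ n, proj t ht (n + 1) x = proj t ht (n + 1) y) : x = y := by
  refine Subtype.ext (ContinuousMap.coe_injective (Continuous.ext_on
    (denseRange_subtype_mk_of_subset_closure (fun k ↦ Ioc_subset_Icc_self (ht k)) htdense)
    x.1.continuous y.1.continuous ?_))
  rintro _ ⟨k, rfl⟩
  exact congrFun (hxy k) (Fin.last k)

lemma phi_eq_measure_of_isCompact (htdense : Icc (0 : ℝ) 1 ⊆ closure (range t)) {P : Measure Cz}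
    [IsFiniteMeasure P] (hP : ∀ n, P.map (proj t ht n) = gauss n (covM t n)) {K : Set Cz}
    (hK : IsCompact K) : phi t ht K = P K := by
  rw [measure_eq_iInf_map_image_of_isCompact (p := fun n ↦ proj t ht (n + 1))
    (fun n ↦ continuous_proj ht (n + 1))
    (fun n x y h ↦ funext fun i ↦ congrFun h i.castSucc)
    (fun x y ↦ eq_of_forall_proj_succ_eq ht htdense) hK]
  simp only [phi, hP]

lemma mu_eq_measure (htdense : Icc (0 : ℝ) 1 ⊆ closure (range t)) {P : Measure Cz}
    [IsFiniteMeasure P] (hP : ∀ n, P.map (proj t ht n) = gauss n (covM t n)) {A : Set Cz}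
    (hA : MeasurableSet A) : mu t ht A = P A := by
  rw [hA.measure_eq_iSup_isCompact, mu]
  exact iSup_congr fun K ↦ iSup_congr fun _ ↦ iSup_congr fun hK ↦
    phi_eq_measure_of_isCompact ht htdense hP hK

end

/-- `μ` is a probability measure on the Borel σ-field of `C`:
it is nonnegative, `μ(C) = 1`, and it is countably additive on pairwise
disjoint Borel sets. -/
theorem stmt15 (t : ℕ → ℝ) (ht : ∀ k, t k ∈ Set.Ioc (0:ℝ) 1)
    (htinj : Function.Injective t)
    (htdense : Set.Icc (0:ℝ) 1 ⊆ closure (Set.range t)) :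
    (∀ A : Set Cz, 0 ≤ mu t ht A) ∧
    mu t ht Set.univ = 1 ∧
    ∀ A : ℕ → Set Cz, (∀ i, MeasurableSet (A i)) →
      Pairwise (Function.onFun Disjoint A) →
      mu t ht (⋃ i, A i) = ∑' i, mu t ht (A i) := by
  obtain ⟨P, hP, hP_proj⟩ := exists_isProbabilityMeasure_map_proj_eq_gauss ht htinj
  have mu_eq {A : Set Cz} (hA : MeasurableSet A) : mu t ht A = P A :=
    mu_eq_measure ht htdense hP_proj hA
  refine ⟨fun A ↦ zero_le, ?_, fun A hA hdisj ↦ ?_⟩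
  · rw [mu_eq .univ, measure_univ]
  · rw [mu_eq (.iUnion hA), measure_iUnion hdisj hA]
    exact tsum_congr fun i ↦ (mu_eq (hA i)).symm

end
end
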